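/- arXiv:1508.02259 — 6 statements merged into one kernel-verified Lean document; each statement's English description precedes it below -/
import Mathlib

section
/- Let U and Y be real Hilbert spaces, H : U → Y a continuous linear map, r ∈ Y and β > 0. For z ∈ Y let J₂(z, u) = (1/2)‖z + H u − r‖² + (β/2)‖u‖². If u₁* minimizes J₂(z₁, ·) over U and u₂* minimizes J₂(z₂, ·) over U, then ‖u₁* − u₂*‖ ≤ (‖H‖/β) ‖z₁ − z₂‖. In particular the follower's best response depends Lipschitz-continuously (hence uniformly) on the leader-induced state, as claimed in Proposition 1. -/
open scoped RealInnerProductSpace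

theorem follower_foc
    {U Y : Type*} [NormedAddCommGroup U] [InnerProductSpace ℝ U]
    [NormedAddCommGroup Y] [InnerProductSpace ℝ Y]
    (H : U →L[ℝ] Y) (w : Y) (β : ℝ) (u : U)
    (h : ∀ x : U, (1 / 2) * ‖w + H u‖ ^ 2 + (β / 2) * ‖u‖ ^ 2
      ≤ (1 / 2) * ‖w + H x‖ ^ 2 + (β / 2) * ‖x‖ ^ 2) (v : U) :
    ⟪w + H u, H v⟫ + β * ⟪u, v⟫ = 0 := by
  have key : ∀ t : ℝ, 0 ≤ ((‖H v‖ ^ 2 + β * ‖v‖ ^ 2) / 2) * (t * t)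
      + (⟪w + H u, H v⟫ + β * ⟪u, v⟫) * t + 0 := by
    intro t
    have ht := h (u + t • v)
    have e : w + H (u + t • v) = (w + H u) + t • H v := by
      rw [map_add, map_smul, add_assoc]
    rw [e, norm_add_sq_real (w + H u), norm_add_sq_real u, inner_smul_right, inner_smul_right,
      norm_smul, norm_smul, mul_pow, mul_pow, Real.norm_eq_abs, sq_abs] at ht
    linarith
  have hd := discrim_le_zero key
  unfold discrim at hd
  have : (⟪w + H u, H v⟫ + β * ⟪u, v⟫) ^ 2 = 0 := le_antisymm (by linarith) (sq_nonneg _)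
  exact pow_eq_zero_iff (two_ne_zero) |>.1 this

/-- Lipschitz dependence of the follower's best response on the
leader-induced state: if `uᵢ*` minimizes `J₂(zᵢ, ·)` then
`‖u₁* − u₂*‖ ≤ (‖H‖/β) ‖z₁ − z₂‖`. -/
theorem follower_best_response_lipschitz
    {U Y : Type*} [NormedAddCommGroup U] [InnerProductSpace ℝ U] [CompleteSpace U]
    [NormedAddCommGroup Y] [InnerProductSpace ℝ Y] [CompleteSpace Y]
    (H : U →L[ℝ] Y) (r : Y) (β : ℝ) (hβ : 0 < β)
    (J₂ : Y → U → ℝ)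
    (hJ₂ : ∀ (z : Y) (u : U),
      J₂ z u = (1 / 2) * ‖z + H u - r‖ ^ 2 + (β / 2) * ‖u‖ ^ 2)
    (z₁ z₂ : Y) (u₁ u₂ : U)
    (h₁ : ∀ u : U, J₂ z₁ u₁ ≤ J₂ z₁ u)
    (h₂ : ∀ u : U, J₂ z₂ u₂ ≤ J₂ z₂ u) :
    ‖u₁ - u₂‖ ≤ (‖H‖ / β) * ‖z₁ - z₂‖ := by
  have e : ∀ (z : Y) (u : U), z + H u - r = (z - r) + H u := fun z u => by abel
  have f₁ := follower_foc H (z₁ - r) β u₁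
    (fun x => by have := h₁ x; rwa [hJ₂, hJ₂, e, e] at this) (u₁ - u₂)
  have f₂ := follower_foc H (z₂ - r) β u₂
    (fun x => by have := h₂ x; rwa [hJ₂, hJ₂, e, e] at this) (u₁ - u₂)
  have k : ⟪z₁ - z₂, H (u₁ - u₂)⟫ + ‖H (u₁ - u₂)‖ ^ 2 + β * ‖u₁ - u₂‖ ^ 2 = 0 := by
    have a : ‖H (u₁ - u₂)‖ ^ 2 = ⟪H u₁, H (u₁ - u₂)⟫ - ⟪H u₂, H (u₁ - u₂)⟫ := by
      rw [← inner_sub_left, ← map_sub, real_inner_self_eq_norm_sq]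
    have b : ‖u₁ - u₂‖ ^ 2 = ⟪u₁, u₁ - u₂⟫ - ⟪u₂, u₁ - u₂⟫ := by
      rw [← inner_sub_left, real_inner_self_eq_norm_sq]
    rw [a, b, inner_sub_left z₁ z₂]
    rw [inner_add_left, inner_sub_left z₁ r] at f₁
    rw [inner_add_left, inner_sub_left z₂ r] at f₂
    linarith
  have c := (abs_le.1 (abs_real_inner_le_norm (z₁ - z₂) (H (u₁ - u₂)))).1
  have o := mul_le_mul_of_nonneg_left (H.le_opNorm (u₁ - u₂)) (norm_nonneg (z₁ - z₂))
  have m : ‖u₁ - u₂‖ * (β * ‖u₁ - u₂‖) ≤ ‖u₁ - u₂‖ * (‖H‖ * ‖z₁ - z₂‖) := by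
    nlinarith [sq_nonneg ‖H (u₁ - u₂)‖]
  rw [div_mul_eq_mul_div, le_div_iff₀ hβ, mul_comm _ β]
  rcases (norm_nonneg (u₁ - u₂)).eq_or_lt with h0 | h0
  · rw [← h0, mul_zero]; positivity
  · exact le_of_mul_le_mul_left m h0
end

section
/- Let U and Y be real Hilbert spaces, H : U → Y a continuous linear map with Hilbert adjoint H*, g ∈ Y and α > 0. If ξ₀ ∈ Y satisfies the variational inequality ⟨H(H*ξ₀) − g, ξ̂ − ξ₀⟩ + α(‖ξ̂‖ − ‖ξ₀‖) ≥ 0 for all ξ̂ ∈ Y, then ‖H(H*ξ₀) − g‖ ≤ α; that is, the control u₁* = H*ξ₀ steers the terminal state into the target ball, as asserted for (3.14) in Proposition 2. -/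
open scoped RealInnerProductSpace

/-- If `ξ₀` satisfies the variational inequality (3.16), then
`‖H(H*ξ₀) − g‖ ≤ α`, i.e. the control `u₁* = H*ξ₀` steers the terminal state
into the target ball (Proposition 2, (3.14)). -/
theorem variational_inequality_implies_feasible
    {U Y : Type*} [NormedAddCommGroup U] [InnerProductSpace ℝ U] [CompleteSpace U]
    [NormedAddCommGroup Y] [InnerProductSpace ℝ Y] [CompleteSpace Y]
    (H : U →L[ℝ] Y) (g : Y) (α : ℝ) (hα : 0 < α)
    (ξ₀ : Y)
    (hVI : ∀ ξhat : Y,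
      ⟪H ((ContinuousLinearMap.adjoint H) ξ₀) - g, ξhat - ξ₀⟫ +
        α * (‖ξhat‖ - ‖ξ₀‖) ≥ 0) :
    ‖H ((ContinuousLinearMap.adjoint H) ξ₀) - g‖ ≤ α := by
  generalize H ((ContinuousLinearMap.adjoint H) ξ₀) - g = r at hVI ⊢
  have h := hVI (ξ₀ - r)
  have e : ξ₀ - r - ξ₀ = -r := by abel
  rw [e, inner_neg_right, real_inner_self_eq_norm_sq] at h
  have t := norm_sub_le ξ₀ r
  have h2 : α * (‖ξ₀ - r‖ - ‖ξ₀‖) ≤ α * ‖r‖ :=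
    mul_le_mul_of_nonneg_left (by linarith) hα.le
  by_contra! hc
  nlinarith [norm_nonneg r]
end

section
/- Let U and Y be real Hilbert spaces, H : U → Y a continuous linear map with Hilbert adjoint H*, g ∈ Y and α > 0. If ξ₀ ∈ Y satisfies the variational inequality ⟨H(H*ξ₀) − g, ξ̂ − ξ₀⟩ + α(‖ξ̂‖ − ‖ξ₀‖) ≥ 0 for all ξ̂ ∈ Y, then u₁* = H*ξ₀ is an optimal feasible control: ‖H u₁* − g‖ ≤ α, and for every u ∈ U with ‖H u − g‖ ≤ α one has ‖H*ξ₀‖ ≤ ‖u‖. (This is the abstract content of Proposition 2: the leader's optimal strategy is u₁* = φ(ξ)χ_{U₁} = H*ξ where ξ solves the variational inequality (3.16).) -/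
open scoped RealInnerProductSpace

/-- If `ξ₀` satisfies the variational inequality (3.16), then
`u₁* = H*ξ₀` is an optimal feasible control: `‖H u₁* − g‖ ≤ α` and
`‖H*ξ₀‖ ≤ ‖u‖` for every feasible `u` (Proposition 2). -/
theorem variational_inequality_gives_optimal_control
    {U Y : Type*} [NormedAddCommGroup U] [InnerProductSpace ℝ U] [CompleteSpace U]
    [NormedAddCommGroup Y] [InnerProductSpace ℝ Y] [CompleteSpace Y]
    (H : U →L[ℝ] Y) (g : Y) (α : ℝ) (hα : 0 < α)
    (ξ₀ : Y)
    (hVI : ∀ ξhat : Y,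
      ⟪H ((ContinuousLinearMap.adjoint H) ξ₀) - g, ξhat - ξ₀⟫ +
        α * (‖ξhat‖ - ‖ξ₀‖) ≥ 0) :
    ‖H ((ContinuousLinearMap.adjoint H) ξ₀) - g‖ ≤ α ∧
      ∀ u : U, ‖H u - g‖ ≤ α → ‖(ContinuousLinearMap.adjoint H) ξ₀‖ ≤ ‖u‖ := by
  set w := (ContinuousLinearMap.adjoint H) ξ₀ with hw
  constructor
  · have h := hVI (ξ₀ - (H w - g))
    have e : ξ₀ - (H w - g) - ξ₀ = -(H w - g) := by abel
    rw [e, inner_neg_right, real_inner_self_eq_norm_sq] at h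
    have h2 := norm_sub_le ξ₀ (H w - g)
    have h3 : α * (‖ξ₀ - (H w - g)‖ - ‖ξ₀‖) ≤ α * ‖H w - g‖ :=
      mul_le_mul_of_nonneg_left (by linarith) hα.le
    by_contra hc
    push Not at hc
    nlinarith
  · intro u hu
    have h0 := hVI 0
    rw [zero_sub, inner_neg_right, norm_zero, inner_sub_left] at h0
    have h1 := abs_le.1 (abs_real_inner_le_norm (H u - g) ξ₀)
    have h2 : ‖H u - g‖ * ‖ξ₀‖ ≤ α * ‖ξ₀‖ :=
      mul_le_mul_of_nonneg_right hu (norm_nonneg _)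
    have h3 := h1.1
    rw [inner_sub_left] at h3
    have a1 : ⟪H u, ξ₀⟫ = ⟪u, w⟫ := (ContinuousLinearMap.adjoint_inner_right H u ξ₀).symm
    have a2 : ⟪H w, ξ₀⟫ = ‖w‖ ^ 2 := by
      rw [← real_inner_self_eq_norm_sq]
      exact (ContinuousLinearMap.adjoint_inner_right H w ξ₀).symm
    rw [a1] at h3
    rw [a2] at h0
    have h4 := real_inner_le_norm u w
    by_contra hc
    push Not at hc
    nlinarith [norm_nonneg u, norm_nonneg w]
end

section
/- Let U and Y be real Hilbert spaces, H : U → Y a continuous linear map with Hilbert adjoint H*, g ∈ Y and α > 0. If ξ₀ ∈ Y satisfies the variational inequality ⟨H(H*ξ₀) − g, ξ̂ − ξ₀⟩ + α(‖ξ̂‖ − ‖ξ₀‖) ≥ 0 for all ξ̂ ∈ Y, then the extremality identity ‖H*ξ₀‖² + α‖ξ₀‖ = ⟨ξ₀, g⟩ holds. -/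
open scoped RealInnerProductSpace

/-- If `ξ₀` satisfies the variational inequality (3.16), then the
extremality identity `‖H*ξ₀‖² + α‖ξ₀‖ = ⟪ξ₀, g⟫` holds. -/
theorem variational_inequality_extremality_identity
    {U Y : Type*} [NormedAddCommGroup U] [InnerProductSpace ℝ U] [CompleteSpace U]
    [NormedAddCommGroup Y] [InnerProductSpace ℝ Y] [CompleteSpace Y]
    (H : U →L[ℝ] Y) (g : Y) (α : ℝ) (hα : 0 < α)
    (ξ₀ : Y)
    (hVI : ∀ ξhat : Y,
      ⟪H ((ContinuousLinearMap.adjoint H) ξ₀) - g, ξhat - ξ₀⟫ +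
        α * (‖ξhat‖ - ‖ξ₀‖) ≥ 0) :
    ‖(ContinuousLinearMap.adjoint H) ξ₀‖ ^ 2 + α * ‖ξ₀‖ = ⟪ξ₀, g⟫ := by
  have h0 := hVI 0
  have h2 := hVI (ξ₀ + ξ₀)
  have hn : ‖ξ₀ + ξ₀‖ = 2 * ‖ξ₀‖ := by
    rw [← two_smul ℝ ξ₀, norm_smul]
    norm_num
  have hH : ⟪H ((ContinuousLinearMap.adjoint H) ξ₀), ξ₀⟫
      = ‖(ContinuousLinearMap.adjoint H) ξ₀‖ ^ 2 := by
    rw [← ContinuousLinearMap.adjoint_inner_right, real_inner_self_eq_norm_sq]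
  rw [zero_sub, inner_neg_right, inner_sub_left, hH, norm_zero, real_inner_comm] at h0
  rw [add_sub_cancel_right, inner_sub_left, hH, hn, real_inner_comm] at h2
  linarith
end

section
/- Let U and Y be real Hilbert spaces, H : U → Y a continuous linear map with Hilbert adjoint H*, g ∈ Y and α > 0. If ξ₀ ∈ Y satisfies the variational inequality ⟨H(H*ξ₀) − g, ξ̂ − ξ₀⟩ + α(‖ξ̂‖ − ‖ξ₀‖) ≥ 0 for all ξ̂ ∈ Y, then strong duality holds with attainment: the infimum of (1/2)‖u‖² over all u ∈ U with ‖H u − g‖ ≤ α equals (1/2)‖H*ξ₀‖², and it equals −F(ξ₀) where F(ξ) = (1/2)‖H*ξ‖² + α‖ξ‖ − ⟨ξ, g⟩. (This is the abstract form of the Fenchel duality identity (3.21) used in the proof of Proposition 2.) -/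
open scoped RealInnerProductSpace

/-- Strong duality with attainment: if `ξ₀` satisfies the
variational inequality (3.16), then the infimum of `(1/2)‖u‖²` over feasible
controls equals `(1/2)‖H*ξ₀‖²` (and it is attained), and this value equals
`−F(ξ₀)` (the Fenchel duality identity (3.21)). -/
theorem leader_strong_duality
    {U Y : Type*} [NormedAddCommGroup U] [InnerProductSpace ℝ U] [CompleteSpace U]
    [NormedAddCommGroup Y] [InnerProductSpace ℝ Y] [CompleteSpace Y]
    (H : U →L[ℝ] Y) (g : Y) (α : ℝ) (hα : 0 < α)
    (F : Y → ℝ)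
    (hF : ∀ ξ : Y,
      F ξ = (1 / 2) * ‖(ContinuousLinearMap.adjoint H) ξ‖ ^ 2 + α * ‖ξ‖ - ⟪ξ, g⟫)
    (ξ₀ : Y)
    (hVI : ∀ ξhat : Y,
      ⟪H ((ContinuousLinearMap.adjoint H) ξ₀) - g, ξhat - ξ₀⟫ +
        α * (‖ξhat‖ - ‖ξ₀‖) ≥ 0) :
    IsLeast ((fun u : U => (1 / 2) * ‖u‖ ^ 2) '' {u : U | ‖H u - g‖ ≤ α})
        ((1 / 2) * ‖(ContinuousLinearMap.adjoint H) ξ₀‖ ^ 2) ∧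
      (1 / 2) * ‖(ContinuousLinearMap.adjoint H) ξ₀‖ ^ 2 = -F ξ₀ := by
  set v := (ContinuousLinearMap.adjoint H) ξ₀ with hv
  have hadj : ∀ u : U, ⟪H u, ξ₀⟫ = ⟪u, v⟫ := fun u =>
    (ContinuousLinearMap.adjoint_inner_right H u ξ₀).symm
  have hN : ⟪H v, ξ₀⟫ = ‖v‖ ^ 2 := by rw [hadj, real_inner_self_eq_norm_sq]
  have h0 := hVI 0
  have h2 := hVI ((2 : ℝ) • ξ₀)
  have e2 : (2 : ℝ) • ξ₀ - ξ₀ = ξ₀ := by rw [two_smul]; abel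
  have n2 : ‖(2 : ℝ) • ξ₀‖ = 2 * ‖ξ₀‖ := by rw [norm_smul]; norm_num
  rw [e2, n2] at h2
  rw [zero_sub, inner_neg_right, norm_zero] at h0
  have heq : ⟪H v - g, ξ₀⟫ = -(α * ‖ξ₀‖) := by linarith
  have hr := hVI (-(H v - g))
  rw [inner_sub_right, inner_neg_right, real_inner_self_eq_norm_sq, norm_neg, heq] at hr
  have hfeas : ‖H v - g‖ ≤ α := by
    by_contra hc
    push Not at hc
    nlinarith
  have key : ‖v‖ ^ 2 = ⟪ξ₀, g⟫ - α * ‖ξ₀‖ := by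
    rw [inner_sub_left, hN, real_inner_comm] at heq
    linarith
  refine ⟨⟨⟨v, hfeas, rfl⟩, ?_⟩, ?_⟩
  · rintro _ ⟨u, hu, rfl⟩
    have hu' : ‖H u - g‖ ≤ α := hu
    have h1 := neg_le_of_abs_le (abs_real_inner_le_norm (H u - g) ξ₀)
    have h3 := mul_le_mul_of_nonneg_right hu' (norm_nonneg ξ₀)
    rw [inner_sub_left, hadj, real_inner_comm] at h1
    have h4 := norm_sub_sq_real u v
    have h5 := sq_nonneg ‖u - v‖
    have h6 := real_inner_comm u v
    have h7 := real_inner_comm g ξ₀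
    show (1 / 2) * ‖v‖ ^ 2 ≤ (1 / 2) * ‖u‖ ^ 2
    linarith
  · rw [hF, ← hv]
    linarith
end

section
/- Let U and Y be real Hilbert spaces, H : U → Y a continuous linear map with Hilbert adjoint H*, g ∈ Y and α > 0, and F(ξ) = (1/2)‖H*ξ‖² + α‖ξ‖ − ⟨ξ, g⟩. If there exists a strictly feasible control, i.e., some u ∈ U with ‖H u − g‖ < α, then F attains its infimum over Y: there exists ξ₀ ∈ Y with F(ξ₀) ≤ F(ξ) for all ξ ∈ Y. (Existence of the dual variable ξ solving the variational inequality (3.16) in Proposition 2.) -/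
open scoped RealInnerProductSpace

/-- If there is a strictly feasible control (`‖H u − g‖ < α`),
then the leader's dual functional `F` attains its infimum over `Y`
(existence of the dual variable `ξ` solving (3.16) in Proposition 2). -/
theorem dual_functional_attains_infimum
    {U Y : Type*} [NormedAddCommGroup U] [InnerProductSpace ℝ U] [CompleteSpace U]
    [NormedAddCommGroup Y] [InnerProductSpace ℝ Y] [CompleteSpace Y]
    (H : U →L[ℝ] Y) (g : Y) (α : ℝ) (hα : 0 < α)
    (F : Y → ℝ)
    (hF : ∀ ξ : Y,
      F ξ = (1 / 2) * ‖(ContinuousLinearMap.adjoint H) ξ‖ ^ 2 + α * ‖ξ‖ - ⟪ξ, g⟫)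
    (hfeas : ∃ u : U, ‖H u - g‖ < α) :
    ∃ ξ₀ : Y, ∀ ξ : Y, F ξ₀ ≤ F ξ := by
  obtain ⟨u, hu⟩ := hfeas
  have key : ∀ (v : U) (ξ : Y), ⟪ξ, H v⟫ - (1/2) * ‖v‖^2
      ≤ (1 / 2) * ‖(ContinuousLinearMap.adjoint H) ξ‖ ^ 2 := by
    intro v ξ
    rw [← ContinuousLinearMap.adjoint_inner_left]
    have h := norm_sub_sq_real ((ContinuousLinearMap.adjoint H) ξ) v
    nlinarith [sq_nonneg ‖(ContinuousLinearMap.adjoint H) ξ - v‖]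
  have minor : ∀ (v : U) (y : Y), ‖y‖ ≤ α → ∀ ξ : Y,
      ⟪ξ, H v + y - g⟫ - (1/2) * ‖v‖^2 ≤ F ξ := by
    intro v y hy ξ
    rw [hF, inner_sub_right, inner_add_right]
    have h1 := real_inner_le_norm ξ y
    have h2 := mul_le_mul_of_nonneg_left hy (norm_nonneg ξ)
    linarith [key v ξ]
  have touch : ∀ ξ : Y, ∃ (v : U) (y : Y), ‖y‖ ≤ α ∧
      ⟪ξ, H v + y - g⟫ - (1/2) * ‖v‖^2 = F ξ := by
    intro ξ
    have hy : ∃ y : Y, ‖y‖ ≤ α ∧ ⟪ξ, y⟫ = α * ‖ξ‖ := by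
      by_cases h : ξ = 0
      · exact ⟨0, by simpa using hα.le, by simp [h]⟩
      · have hn : ‖ξ‖ ≠ 0 := norm_ne_zero_iff.mpr h
        refine ⟨(α / ‖ξ‖) • ξ, ?_, ?_⟩
        · rw [norm_smul, Real.norm_of_nonneg (by positivity)]
          field_simp
          exact le_refl _
        · rw [inner_smul_right, real_inner_self_eq_norm_sq]
          field_simp
    obtain ⟨y, hy1, hy2⟩ := hy
    refine ⟨(ContinuousLinearMap.adjoint H) ξ, y, hy1, ?_⟩
    rw [hF, inner_sub_right, inner_add_right, hy2,
      ← ContinuousLinearMap.adjoint_inner_left, real_inner_self_eq_norm_sq]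
    ring
  let T := InnerProductSpace.toDual ℝ Y
  let S : WeakDual ℝ Y → Y := fun φ => T.symm (WeakDual.toStrongDual φ)
  have hS : ∀ (φ : WeakDual ℝ Y) (y : Y), ⟪S φ, y⟫ = φ y := by
    intro φ y
    exact InnerProductSpace.toDual_symm_apply
  have lsc : LowerSemicontinuous (fun φ => F (S φ)) := by
    intro φ c hc
    obtain ⟨v, y, hy, h⟩ := touch (S φ)
    have hc' : c < φ (H v + y - g) - (1/2) * ‖v‖^2 := by
      rw [← hS, h]; exact hc
    have hcont : Continuous (fun ψ : WeakDual ℝ Y => ψ (H v + y - g) - (1/2) * ‖v‖^2) :=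
      (WeakDual.eval_continuous _).sub continuous_const
    filter_upwards [hcont.continuousAt.eventually (lt_mem_nhds hc')] with ψ hψ
    have := minor v y hy (S ψ)
    rw [hS] at this
    exact lt_of_lt_of_le hψ this
  have hδ : 0 < α - ‖H u - g‖ := by linarith
  let R := (1/2) * ‖u‖^2 / (α - ‖H u - g‖)
  have hR : 0 ≤ R := by positivity
  have hcomp := WeakDual.isCompact_closedBall (𝕜 := ℝ) (E := Y) 0 R
  obtain ⟨φ, -, hmin⟩ := LowerSemicontinuousOn.exists_isMinOn
    (f := fun φ => F (S φ)) ⟨0, by simpa using hR⟩ hcomp (lsc.lowerSemicontinuousOn _)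
  have hle : ∀ ξ : Y, ‖ξ‖ ≤ R → F (S φ) ≤ F ξ := by
    intro ξ hξ
    have h := hmin (a := StrongDual.toWeakDual (T ξ)) (by simpa [T] using hξ)
    have e : S (StrongDual.toWeakDual (T ξ)) = ξ := T.symm_apply_apply ξ
    simpa only [Set.mem_setOf_eq, e] using h
  refine ⟨S φ, fun ξ => ?_⟩
  by_cases h : ‖ξ‖ ≤ R
  · exact hle ξ h
  · have h0 := hle 0 (by simpa using hR)
    have hF0 : F 0 = 0 := by simp [hF]
    have h1 : (1/2) * ‖u‖^2 < ‖ξ‖ * (α - ‖H u - g‖) := (div_lt_iff₀ hδ).mp (not_le.mp h)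
    have h2 := key u ξ
    have h3 := real_inner_le_norm ξ (-(H u - g))
    rw [norm_neg, inner_neg_right, inner_sub_right] at h3
    have h4 := hF ξ
    linarith
end
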